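/- Let p be an odd prime, q = p^m with m ≥ 1, and k a positive divisor of q−1 with −1 ∉ R_k (i.e. Γ(k,q) is directed). Let A be the adjacency matrix of Γ(k,q) with natural number entries (A x y = 1 if y − x ∈ R_k, else 0). Then: (i) if k ≠ q−1, the period of Γ(k,q) is 1, i.e. for every natural number d, if d divides every positive ℓ for which the trace of A^ℓ is nonzero, then d = 1; (ii) if k = q−1, the period is p, i.e. for every positive ℓ, the trace of A^ℓ is nonzero if and only if p divides ℓ. -/

import Mathlib

open scoped Classical

/-!
A closed walk of length `n` in a Cayley digraph is a way of writing `0` as a sum of `n` connection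
elements. Since `1` is a `k`-th power, `p` copies of `1` give a closed walk of length `p`. If
`q - 1 ∤ k`, the sum of `x ^ k` over all `x ≠ 0` vanishes, which gives a closed walk of length
`q - 1`, and `q - 1` is coprime to `p`. If `q - 1 ∣ k`, the only nonzero `k`-th power is `1`, and
`n • 1 = 0` forces `p ∣ n`.
-/

section CayleyDigraph

variable {G : Type*} [AddCommGroup G]

/-- The adjacency matrix, with natural number entries, of the Cayley digraph on `G` with connection
set `S`: there is an arc from `x` to `y` iff `y - x ∈ S`. -/
noncomputable def cayleyAdjMatrix (S : Set G) : Matrix G G ℕ :=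
  Matrix.of fun x y => S.indicator 1 (y - x)

theorem cayleyAdjMatrix_apply_ne_zero_iff {S : Set G} {x y : G} :
    cayleyAdjMatrix S x y ≠ 0 ↔ y - x ∈ S := by
  simp [cayleyAdjMatrix]

variable [Fintype G] [DecidableEq G]

theorem cayleyAdjMatrix_pow_apply_ne_zero_iff {S : Set G} {n : ℕ} {x y : G} :
    (cayleyAdjMatrix S ^ n) x y ≠ 0 ↔ ∃ f : Fin n → S, ∑ i, (f i : G) = y - x := by
  induction n generalizing x with
  | zero => simp [Matrix.one_apply, sub_eq_zero, eq_comm]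
  | succ n ih =>
    calc (cayleyAdjMatrix S ^ (n + 1)) x y ≠ 0
      _ ↔ ∃ z, cayleyAdjMatrix S x z ≠ 0 ∧ (cayleyAdjMatrix S ^ n) z y ≠ 0 := by
        simp [pow_succ', Matrix.mul_apply]
      _ ↔ ∃ z, z - x ∈ S ∧ ∃ f : Fin n → S, ∑ i, (f i : G) = y - z := by
        simp only [cayleyAdjMatrix_apply_ne_zero_iff, ih]
      _ ↔ ∃ (s : S) (f : Fin n → S), s + ∑ i, (f i : G) = y - x := by
        constructor
        · rintro ⟨z, hz, f, hf⟩
          exact ⟨⟨z - x, hz⟩, f, by rw [hf, sub_add_sub_cancel']⟩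
        · rintro ⟨s, f, hf⟩
          exact ⟨x + s, by simp, f, by rw [← sub_sub, ← hf, add_sub_cancel_left]⟩
      _ ↔ ∃ f : Fin (n + 1) → S, ∑ i, (f i : G) = y - x := by
        simp only [Fin.exists_fin_succ_pi, Fin.sum_univ_succ, Fin.cons_zero, Fin.cons_succ]

theorem trace_cayleyAdjMatrix_pow_ne_zero_iff {S : Set G} {n : ℕ} :
    (cayleyAdjMatrix S ^ n).trace ≠ 0 ↔ ∃ f : Fin n → S, ∑ i, (f i : G) = 0 := by
  have diag_ne_zero_iff (x : G) :
      (cayleyAdjMatrix S ^ n) x x ≠ 0 ↔ ∃ f : Fin n → S, ∑ i, (f i : G) = 0 := by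
    rw [cayleyAdjMatrix_pow_apply_ne_zero_iff, sub_self]
  simp only [Matrix.trace, Matrix.diag_apply, ne_eq, Finset.sum_eq_zero_iff, Finset.mem_univ,
    true_imp_iff, not_forall]
  simp only [diag_ne_zero_iff, exists_const]

theorem trace_cayleyAdjMatrix_pow_card_ne_zero {ι : Type*} [Fintype ι] {S : Set G} {f : ι → G}
    (hfS : ∀ i, f i ∈ S) (hf : ∑ i, f i = 0) :
    (cayleyAdjMatrix S ^ Fintype.card ι).trace ≠ 0 := by
  refine trace_cayleyAdjMatrix_pow_ne_zero_iff.2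
    ⟨fun j => ⟨f ((Fintype.equivFin ι).symm j), hfS _⟩, ?_⟩
  rw [← hf]
  exact (Fintype.equivFin ι).symm.sum_comp f

theorem trace_cayleyAdjMatrix_pow_addOrderOf_ne_zero {S : Set G} {g : G} (hg : g ∈ S) :
    (cayleyAdjMatrix S ^ addOrderOf g).trace ≠ 0 :=
  trace_cayleyAdjMatrix_pow_ne_zero_iff.2 ⟨fun _ => ⟨g, hg⟩, by simp⟩

theorem trace_cayleyAdjMatrix_singleton_pow_ne_zero_iff {g : G} {n : ℕ} :
    (cayleyAdjMatrix {g} ^ n).trace ≠ 0 ↔ addOrderOf g ∣ n := by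
  have coe_eq (s : ({g} : Set G)) : (s : G) = g := s.2
  simp [trace_cayleyAdjMatrix_pow_ne_zero_iff, coe_eq, addOrderOf_dvd_iff_nsmul_eq_zero]

end CayleyDigraph

section Characteristic

variable (R : Type*) [Ring R] (p : ℕ) [CharP R p]

theorem addOrderOf_one_eq_char : addOrderOf (1 : R) = p :=
  CharP.eq R (CharP.addOrderOf_one R) inferInstance

theorem coprime_char_card_sub_one [Fintype R] : p.Coprime (Fintype.card R - 1) := by
  have char_dvd_card : p ∣ Fintype.card R :=
    (CharP.cast_eq_zero_iff R p _).1 (Nat.cast_card_eq_zero R)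
  have card_coprime : (Fintype.card R).Coprime (Fintype.card R - 1) :=
    (Nat.coprime_self_sub_right Fintype.card_pos).2 (Nat.coprime_one_right _)
  exact card_coprime.coprime_dvd_left char_dvd_card

end Characteristic

section NonzeroPowers

/-- The set `R_k` of `k`-th powers of nonzero elements of `M`. For a finite field with `q` elements
it is the connection set of the generalized Paley graph `Γ(k, q)`. -/
def nonzeroPowers (M : Type*) [MonoidWithZero M] (k : ℕ) : Set M :=
  {x | ∃ z : M, z ≠ 0 ∧ z ^ k = x}

variable {M : Type*} [MonoidWithZero M] [Nontrivial M] {k : ℕ}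

theorem one_mem_nonzeroPowers : (1 : M) ∈ nonzeroPowers M k :=
  ⟨1, one_ne_zero, one_pow k⟩

theorem units_pow_mem_nonzeroPowers (u : Mˣ) : (u : M) ^ k ∈ nonzeroPowers M k :=
  ⟨u, u.ne_zero, rfl⟩

end NonzeroPowers

section FiniteField

variable {F : Type*} [Field F] [Fintype F] {k : ℕ}

theorem nonzeroPowers_eq_singleton_one (hk : Fintype.card F - 1 ∣ k) :
    nonzeroPowers F k = {1} := by
  refine Set.Subset.antisymm ?_ (Set.singleton_subset_iff.2 one_mem_nonzeroPowers)
  rintro _ ⟨z, hz, rfl⟩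
  obtain ⟨c, rfl⟩ := hk
  rw [Set.mem_singleton_iff, pow_mul, FiniteField.pow_card_sub_one_eq_one z hz, one_pow]

variable [DecidableEq F]

theorem trace_cayleyAdjMatrix_nonzeroPowers_pow_char_ne_zero (p : ℕ) [CharP F p] :
    (cayleyAdjMatrix (nonzeroPowers F k) ^ p).trace ≠ 0 := by
  simpa only [addOrderOf_one_eq_char F p] using
    trace_cayleyAdjMatrix_pow_addOrderOf_ne_zero (one_mem_nonzeroPowers (M := F) (k := k))

theorem trace_cayleyAdjMatrix_nonzeroPowers_pow_card_sub_one_ne_zero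
    (hk : ¬ Fintype.card F - 1 ∣ k) :
    (cayleyAdjMatrix (nonzeroPowers F k) ^ (Fintype.card F - 1)).trace ≠ 0 := by
  have sum_pow_eq_zero : ∑ u : Fˣ, (u : F) ^ k = 0 := by
    simpa [hk] using FiniteField.sum_pow_units F k
  rw [← Fintype.card_units]
  exact trace_cayleyAdjMatrix_pow_card_ne_zero units_pow_mem_nonzeroPowers sum_pow_eq_zero

end FiniteField

theorem gpDigraph_periods_general (F : Type*) [Field F] [Fintype F] [DecidableEq F]
    (p : ℕ) [CharP F p] (k : ℕ) :
    (¬ Fintype.card F - 1 ∣ k →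
      ∀ d : ℕ, (∀ ℓ : ℕ, 0 < ℓ → (cayleyAdjMatrix (nonzeroPowers F k) ^ ℓ).trace ≠ 0 → d ∣ ℓ) →
        d = 1) ∧
    (Fintype.card F - 1 ∣ k →
      ∀ ℓ : ℕ, (cayleyAdjMatrix (nonzeroPowers F k) ^ ℓ).trace ≠ 0 ↔ p ∣ ℓ) := by
  refine ⟨fun hk d hd => ?_, fun hk ℓ => ?_⟩
  · have hdp : d ∣ p :=
      hd p (CharP.char_is_prime F p).pos (trace_cayleyAdjMatrix_nonzeroPowers_pow_char_ne_zero p)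
    have hdq : d ∣ Fintype.card F - 1 :=
      hd _ (Nat.sub_pos_of_lt Fintype.one_lt_card)
        (trace_cayleyAdjMatrix_nonzeroPowers_pow_card_sub_one_ne_zero hk)
    exact Nat.eq_one_of_dvd_coprimes (coprime_char_card_sub_one F p) hdp hdq
  · rw [nonzeroPowers_eq_singleton_one hk, trace_cayleyAdjMatrix_singleton_pow_ne_zero_iff,
      addOrderOf_one_eq_char F p]

theorem gpDigraph_periods
    (p m k : ℕ) (hp : p.Prime) (hodd : Odd p) (hm : 1 ≤ m)
    (F : Type*) [Field F] [Fintype F] [DecidableEq F]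
    (hF : Fintype.card F = p ^ m)
    (hk : 0 < k) (hkdvd : k ∣ p ^ m - 1)
    (hdir : ¬ ∃ z : F, z ≠ 0 ∧ z ^ k = -1)
    (A : Matrix F F ℕ)
    (hA : ∀ x y : F, A x y = if ∃ z : F, z ≠ 0 ∧ z ^ k = y - x then 1 else 0) :
    (k ≠ p ^ m - 1 →
      ∀ d : ℕ, (∀ ℓ : ℕ, 0 < ℓ → (A ^ ℓ).trace ≠ 0 → d ∣ ℓ) → d = 1) ∧
    (k = p ^ m - 1 →
      ∀ ℓ : ℕ, 0 < ℓ → ((A ^ ℓ).trace ≠ 0 ↔ p ∣ ℓ)) := by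
  have : Fact p.Prime := ⟨hp⟩
  have : CharP F p := charP_of_card_eq_prime_pow hF
  obtain rfl : A = cayleyAdjMatrix (nonzeroPowers F k) := by
    ext x y
    simp [hA, cayleyAdjMatrix, nonzeroPowers, Set.indicator_apply]
  obtain ⟨period_one, period_char⟩ := gpDigraph_periods_general F p k
  rw [hF] at period_one period_char
  exact ⟨fun hne => period_one fun h => hne (hkdvd.antisymm h),
    fun heq ℓ _ => period_char heq.symm.dvd ℓ⟩
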